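/- Let V be a nonempty Gotzmann set of monomials of degree d in K[x_1,…,x_n] with gcd(V) = 1. If |D_i(V)| = |V|_{<<n−1>>} for every i = 1, 2, …, n, then V = M^d. -/

import Mathlib

/-!
The proof rests on Macaulay's lower bound `|MV| ≥ |V|^{<n-1>}` applied to the monomials free of
one variable. Split `MV` into the multiples of `x_i` and the rest: the former contain `x_i V`, and
the latter contain the shadow of `D_i(V)` in the remaining `n - 1` variables. Since
`h^{<n>} = h + (h_{<<n>>})^{<n-1>}` (`macUp_eq_add`), the hypotheses on `|MV|` and `|D_i(V)|` make
this splitting tight, so every multiple of `x_i` in `MV` lies in `x_i V` (`exchange_of_card`). Thus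
`x_i ∣ v ∈ V` implies `x_j v / x_i ∈ V` for all `i` and `j`, and a nonempty set of monomials of
degree `d` with this property is `M^d` (`mem_of_exchange`).

Macaulay's bound (`macaulay`) is proved by induction on the number of variables and on the exponent
of `x_0`. With `w = |D_0|`, `u = |V| - w`, `F = macUp (n+1)` and `f = macUp n`, the same splitting
gives `|MV| ≥ f(w) + max(w + u, F(u))`, and it remains to see that this is at least `F(w + u)`
(`macUp_le_max`). This is a statement about binomial representations: on the interval from
`C(a, n+1)` to `C(a+1, n+1)` the function `F` is a translate of `f` (`macUp_block`), which gives
by induction an exchange inequality (`macUp_exchange`) and from it the bound `macUp_window`.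
-/

open Finset

/-- `macUp n h` is `h^{<n>}`, computed via the greedy (Macaulay) binomial
representation `h = C(a_n, n) + C(a_{n-1}, n-1) + ⋯` (equivalently
`h = C(h(n)+n, n) + ⋯ + C(h(i)+i, i)` with `h(n) ≥ ⋯ ≥ h(i) ≥ 0`), giving
`h^{<n>} = C(a_n+1, n) + C(a_{n-1}+1, n-1) + ⋯`; `macUp n 0 = 0`, `macUp 0 1 = 1`. -/
def macUp : ℕ → ℕ → ℕ
  | 0, h => h
  | n+1, h =>
    if h = 0 then 0
    else
      let a := Nat.findGreatest (fun a => Nat.choose a (n+1) ≤ h) (h + n + 1)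
      Nat.choose (a+1) (n+1) + macUp n (h - Nat.choose a (n+1))
/-- `macDDown n h` is `h_{<<n>>} = C(a_n-1, n-1) + C(a_{n-1}-1, n-2) + ⋯` where
`h = C(a_n, n) + C(a_{n-1}, n-1) + ⋯` is the `n`th binomial representation;
`macDDown n 0 = 0` and `macDDown 0 1 = 1`. -/
def macDDown : ℕ → ℕ → ℕ
  | 0, h => h
  | n+1, h =>
    if h = 0 then 0
    else
      let a := Nat.findGreatest (fun a => Nat.choose a (n+1) ≤ h) (h + n + 1)
      Nat.choose (a-1) n + macDDown n (h - Nat.choose a (n+1))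
/-- Monomials in `K[x_1,…,x_n]` are identified with their exponent vectors
`Fin n → ℕ`; the degree of `v` is `∑ i, v i`.  `shad V` is the set
`MV = {x_j v : v ∈ V, 1 ≤ j ≤ n}`. -/
def shad {n : ℕ} (V : Finset (Fin n → ℕ)) : Finset (Fin n → ℕ) :=
  (Finset.univ ×ˢ V).image fun p => p.2 + Pi.single p.1 1
/-- `gcd(V)` of a set of monomials: the exponentwise minimum. -/
noncomputable def gcdMon {n : ℕ} (V : Finset (Fin n → ℕ)) : Fin n → ℕ :=
  fun i => sInf ((fun v => v i) '' (V : Set (Fin n → ℕ)))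
open Classical in
/-- `K_i(V)`: for `|V| ≤ 1` it is `V`; otherwise the set of monomials of `V`
divisible by `x_i · gcd(V)`. -/
noncomputable def Kset {n : ℕ} (V : Finset (Fin n → ℕ)) (i : Fin n) : Finset (Fin n → ℕ) :=
  if V.card ≤ 1 then V
  else V.filter fun v => ∀ j, gcdMon V j + (Pi.single i 1 : Fin n → ℕ) j ≤ v j

/-- `D_i(V) = V \ K_i(V)`. -/
noncomputable def Dset {n : ℕ} (V : Finset (Fin n → ℕ)) (i : Fin n) : Finset (Fin n → ℕ) :=
  V \ Kset V i

/-! ### Binomial representations -/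

/-- Greedy decomposition of a positive `h` at level `n + 1`, with the resulting values of `macUp` and
`macDDown`. -/
lemma greedy (n h : ℕ) (hh : 0 < h) :
    ∃ a r, n + 1 ≤ a ∧ r < a.choose n ∧ h = a.choose (n + 1) + r ∧
      macUp (n + 1) h = (a + 1).choose (n + 1) + macUp n r ∧
      macDDown (n + 1) h = (a - 1).choose n + macDDown n r := by
  set a := Nat.findGreatest (fun a => Nat.choose a (n+1) ≤ h) (h + n + 1) with ha
  have h1 : a.choose (n + 1) ≤ h :=
    Nat.findGreatest_spec (P := fun a => Nat.choose a (n+1) ≤ h) (m := 0) (Nat.zero_le _) (by simp)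
  have h2 : n + 1 ≤ a := Nat.le_findGreatest (by omega) (by simp; omega)
  have hgrow : ∀ k, k < (n + 1 + k).choose (n + 1) := by
    intro k
    induction k with
    | zero => simp
    | succ k ih =>
      have e : (n + 1 + (k + 1)).choose (n + 1)
          = (n + 1 + k).choose n + (n + 1 + k).choose (n + 1) := Nat.choose_succ_succ _ _
      have : 0 < (n + 1 + k).choose n := Nat.choose_pos (by omega)
      omega
  have h3 : h < (a + 1).choose (n + 1) := by
    by_contra hc
    push Not at hc
    have hb : a + 1 ≤ h + n + 1 := by
      by_contra hlt
      have := hgrow h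
      have := Nat.choose_le_choose (n + 1) (show n + 1 + h ≤ a + 1 by omega)
      omega
    have := Nat.le_findGreatest (P := fun a => Nat.choose a (n+1) ≤ h) hb hc
    omega
  have e : (a + 1).choose (n + 1) = a.choose n + a.choose (n + 1) := Nat.choose_succ_succ _ _
  refine ⟨a, h - a.choose (n + 1), h2, by omega, by omega, ?_, ?_⟩
  · rw [macUp, if_neg hh.ne']
  · rw [macDDown, if_neg hh.ne']

lemma choose_block_unique {n a b r s : ℕ} (hr : r < a.choose n) (hs : s < b.choose n)
    (h : a.choose (n + 1) + r = b.choose (n + 1) + s) : a = b := by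
  have key : ∀ {a b r s : ℕ}, r < a.choose n →
      a.choose (n + 1) + r = b.choose (n + 1) + s → ¬ a < b := by
    intro a b r s hr h hab
    have e : (a + 1).choose (n + 1) = a.choose n + a.choose (n + 1) := Nat.choose_succ_succ _ _
    have := Nat.choose_le_choose (n + 1) (show a + 1 ≤ b by omega)
    omega
  have h1 := key hr h
  have h2 := key hs h.symm
  omega

lemma macUp_zero (n : ℕ) : macUp n 0 = 0 := by cases n <;> simp [macUp]

lemma macDDown_zero (n : ℕ) : macDDown n 0 = 0 := by cases n <;> simp [macDDown]

lemma macUp_block_lt {n a r : ℕ} (hr : r < a.choose n) (hpos : 0 < a.choose (n + 1) + r) :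
    macUp (n + 1) (a.choose (n + 1) + r) = (a + 1).choose (n + 1) + macUp n r := by
  obtain ⟨b, s, -, hs, e, hU, -⟩ := greedy n _ hpos
  obtain rfl := choose_block_unique hr hs e
  obtain rfl : r = s := by omega
  exact hU

lemma macUp_choose {n a : ℕ} (h : n ≤ a) : macUp n (a.choose n) = (a + 1).choose n := by
  cases n with
  | zero => simp [macUp]
  | succ n =>
    have := macUp_block_lt (n := n) (a := a) (r := 0) (Nat.choose_pos (by omega))
      (by have := Nat.choose_pos h; omega)
    simpa [macUp_zero] using this

/-- Block recursion: between `C(a, n+1)` and `C(a+1, n+1)`, both ends included, `macUp (n+1)` is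
`macUp n` translated. The value at `0` is the only exception. -/
lemma macUp_block {n a r : ℕ} (hr : r ≤ a.choose n) (hpos : 0 < a.choose (n + 1) + r) :
    macUp (n + 1) (a.choose (n + 1) + r) = (a + 1).choose (n + 1) + macUp n r := by
  rcases hr.lt_or_eq with h | rfl
  · exact macUp_block_lt h hpos
  · have hn : n ≤ a := by
      by_contra hc
      simp [Nat.choose_eq_zero_of_lt (show a < n by omega),
        Nat.choose_eq_zero_of_lt (show a < n + 1 by omega)] at hpos
    have e : a.choose (n + 1) + a.choose n = (a + 1).choose (n + 1) := by
      rw [Nat.choose_succ_succ]; ring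
    rw [e, macUp_choose (by omega), macUp_choose hn, Nat.choose_succ_succ (a + 1)]
    ring

lemma macUp_block_le {n a r : ℕ} (hr : r ≤ a.choose n) :
    macUp (n + 1) (a.choose (n + 1) + r) ≤ (a + 1).choose (n + 1) + macUp n r := by
  rcases Nat.eq_zero_or_pos (a.choose (n + 1) + r) with h | h
  · rw [h, macUp_zero]; exact Nat.zero_le _
  · exact (macUp_block hr h).le

/-- Block decomposition with the remainder in the half-open range `(0, C(c, n)]`. -/
lemma exists_block_pos (n y : ℕ) (hy : 0 < y) :
    ∃ c q : ℕ, 0 < q ∧ q ≤ c.choose n ∧ y = c.choose (n + 1) + q := by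
  obtain ⟨a, r, ha, hr, e, -⟩ := greedy n y hy
  rcases Nat.eq_zero_or_pos r with rfl | h
  · obtain ⟨c, rfl⟩ : ∃ c, a = c + 1 := ⟨a - 1, by omega⟩
    refine ⟨c, c.choose n, Nat.choose_pos (by omega), le_rfl, ?_⟩
    rw [e, Nat.choose_succ_succ]; ring
  · exact ⟨a, r, h, hr.le, e⟩

lemma macUp_mono (n : ℕ) : Monotone (macUp n) := by
  induction n with
  | zero => intro a b h; simpa [macUp] using h
  | succ n ih =>
    refine monotone_nat_of_le_succ fun x => ?_
    obtain ⟨c, q, hq, hqc, e⟩ := exists_block_pos n (x + 1) (by omega)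
    have e' : x = c.choose (n + 1) + (q - 1) := by omega
    have h1 := macUp_block_le (n := n) (a := c) (r := q - 1) (by omega)
    rw [← e'] at h1
    have h2 := macUp_block hqc (by omega)
    rw [← e] at h2
    have := ih (Nat.sub_le q 1)
    omega

/-! ### Numerical inequalities -/

/-- Exchange inequality: for arguments up to `L = C(b, n)` and fixed sum, `F(x) + F(y)` is least
when one argument is as large as `L` permits. Moving the top partial block of the smaller
argument to the larger one reduces to the same statement for `n - 1`. -/
lemma macUp_exchange (n : ℕ) : ∀ b x y : ℕ, x ≤ b.choose n → y ≤ b.choose n →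
    macUp n (min (x + y) (b.choose n)) + macUp n (x + y - b.choose n)
      ≤ macUp n x + macUp n y := by
  induction n with
  | zero => intro b x y _ _; simp only [macUp]; omega
  | succ n ih =>
    intro b
    suffices H : ∀ y x : ℕ, x ≤ b.choose (n + 1) → y ≤ x →
        macUp (n + 1) (min (x + y) (b.choose (n + 1))) + macUp (n + 1) (x + y - b.choose (n + 1))
          ≤ macUp (n + 1) x + macUp (n + 1) y by
      intro x y hx hy
      rcases le_total y x with h | h
      · exact H y x hx h
      · have := H x y hy h
        rw [add_comm x y]; omega
    intro y
    induction y using Nat.strong_induction_on with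
    | _ y ihy =>
    intro x hx hyx
    rcases Nat.eq_zero_or_pos y with rfl | hy
    · rw [add_zero, min_eq_left hx, Nat.sub_eq_zero_of_le hx]
    rcases hx.eq_or_lt with rfl | hxL
    · rw [min_eq_right (by omega), Nat.add_sub_cancel_left]
    obtain ⟨a, p, ha, hp, ex, -⟩ := greedy n x (by omega)
    obtain ⟨c, q, hq, hqc, ey⟩ := exists_block_pos n y hy
    have hca : c ≤ a := by
      by_contra hlt
      have := Nat.choose_le_choose (n + 1) (show a + 1 ≤ c by omega)
      have : (a + 1).choose (n + 1) = a.choose n + a.choose (n + 1) := Nat.choose_succ_succ _ _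
      omega
    have hcaL := Nat.choose_le_choose n hca
    have hab : a + 1 ≤ b := by
      by_contra hlt
      have := Nat.choose_le_choose (n + 1) (show b ≤ a by omega)
      omega
    have habL := Nat.choose_le_choose (n + 1) hab
    have ea : (a + 1).choose (n + 1) = a.choose n + a.choose (n + 1) := Nat.choose_succ_succ _ _
    have hapos : 0 < a.choose (n + 1) := Nat.choose_pos ha
    have hex := ih a p q hp.le (by omega)
    -- the amount moved: either all of `q`, or what completes the block of `x`
    obtain ⟨t, ht⟩ : ∃ t, t = min q (a.choose n - p) := ⟨_, rfl⟩
    have e1 : min (p + q) (a.choose n) = p + t := by omega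
    have e2 : p + q - a.choose n = q - t := by omega
    rw [e1, e2] at hex
    have f1 := macUp_block (n := n) (a := a) (r := p) hp.le (by omega)
    have f2 := macUp_block (n := n) (a := a) (r := p + t) (by omega) (by omega)
    have f3 := macUp_block (n := n) (a := c) (r := q) hqc (by omega)
    have f4 := macUp_block_le (n := n) (a := c) (r := q - t) (by omega)
    rw [← ex] at f1
    rw [← ey] at f3
    rw [← add_assoc, ← ex] at f2
    rw [show c.choose (n + 1) + (q - t) = y - t by omega] at f4
    have := ihy (y - t) (by omega) (x + t) (by omega) (by omega)
    rw [show x + t + (y - t) = x + y by omega] at this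
    omega

lemma macUp_subadd (n x y : ℕ) : macUp n (x + y) ≤ macUp n x + macUp n y := by
  cases n with
  | zero => simp [macUp]
  | succ n =>
    obtain ⟨a, r, -, hr, e, -⟩ := greedy n (x + y + 1) (by omega)
    have ea : (a + 1).choose (n + 1) = a.choose n + a.choose (n + 1) := Nat.choose_succ_succ _ _
    have := macUp_exchange (n + 1) (a + 1) x y (by omega) (by omega)
    rw [min_eq_left (by omega), Nat.sub_eq_zero_of_le (by omega), macUp_zero] at this
    omega

lemma macDDown_le_choose (n : ℕ) : ∀ a r : ℕ, r < a.choose (n + 1) →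
    macDDown (n + 1) r ≤ (a - 1).choose n := by
  induction n with
  | zero =>
    intro a r hr
    rcases Nat.eq_zero_or_pos r with rfl | h
    · simp [macDDown_zero]
    · obtain ⟨b, s, hb, hs, e, -, hD⟩ := greedy 0 r h
      simp only [Nat.choose_zero_right, Nat.lt_one_iff] at hs
      subst hs
      rw [hD]; simp [macDDown]
  | succ n ih =>
    intro a r hr
    rcases Nat.eq_zero_or_pos r with rfl | h
    · simp [macDDown_zero]
    · obtain ⟨b, s, hb, hs, e, -, hD⟩ := greedy (n + 1) r h
      have hba : b < a := by
        by_contra hlt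
        have := Nat.choose_le_choose (n + 2) (show a ≤ b by omega)
        simp only [Nat.add_assoc, Nat.reduceAdd] at *
        omega
      have h1 := ih b s hs
      have h2 := Nat.choose_le_choose (n + 1) (show b ≤ a - 1 by omega)
      obtain ⟨c, rfl⟩ : ∃ c, b = c + 1 := ⟨b - 1, by omega⟩
      have : (c + 1).choose (n + 1) = c.choose n + c.choose (n + 1) := Nat.choose_succ_succ _ _
      simp only [Nat.add_sub_cancel] at *
      omega

lemma macDDown_le (n : ℕ) : ∀ r, macDDown n r ≤ r := by
  induction n with
  | zero => intro r; simp [macDDown]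
  | succ n ih =>
    intro r
    rcases Nat.eq_zero_or_pos r with rfl | h
    · simp [macDDown_zero]
    · obtain ⟨b, s, hb, hs, e, -, hD⟩ := greedy n r h
      have h1 := ih s
      obtain ⟨c, rfl⟩ : ∃ c, b = c + 1 := ⟨b - 1, by omega⟩
      have : (c + 1).choose (n + 1) = c.choose n + c.choose (n + 1) := Nat.choose_succ_succ _ _
      simp only [Nat.add_sub_cancel] at *
      omega

/-- `h^{<n+1>} = h + (h_{<<n+1>>})^{<n>}`. -/
lemma macUp_eq_add (n : ℕ) : ∀ h : ℕ,
    macUp (n + 1) h = h + macUp n (macDDown (n + 1) h) := by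
  induction n with
  | zero =>
    intro h
    rcases Nat.eq_zero_or_pos h with rfl | hh
    · simp [macDDown_zero, macUp_zero]
    · obtain ⟨a, r, ha, hr, e, hU, hD⟩ := greedy 0 h hh
      simp only [Nat.choose_zero_right, Nat.lt_one_iff] at hr
      subst hr
      rw [hU, hD, e]; simp [macDDown, macUp]
  | succ n ih =>
    intro h
    rcases Nat.eq_zero_or_pos h with rfl | hh
    · simp [macDDown_zero, macUp_zero]
    · obtain ⟨a, r, ha, hr, e, hU, hD⟩ := greedy (n + 1) h hh
      have hb := macDDown_le_choose n a r hr
      obtain ⟨c, rfl⟩ : ∃ c, a = c + 1 := ⟨a - 1, by omega⟩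
      simp only [Nat.add_sub_cancel] at *
      have hc : 0 < c.choose (n + 1) := Nat.choose_pos (by omega)
      have h1 := macUp_block hb (by omega)
      have : (c + 1 + 1).choose (n + 1 + 1)
        = (c + 1).choose (n + 1) + (c + 1).choose (n + 1 + 1) := Nat.choose_succ_succ _ _
      rw [hU, hD, h1, ih r]
      omega

/-- Windows of length `w < h_{<<n+1>>}` ending at `h`: the increase of `macUp (n+1)` over such a
window is at most `macUp n w`. -/
lemma macUp_window (n : ℕ) : ∀ h w : ℕ, w < macDDown (n + 1) h →
    macUp (n + 1) h ≤ macUp n w + macUp (n + 1) (h - w) := by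
  induction n with
  | zero =>
    intro h w hw
    rcases Nat.eq_zero_or_pos h with rfl | hh
    · simp [macDDown_zero] at hw
    · obtain ⟨a, r, ha, hr, e, hU, hD⟩ := greedy 0 h hh
      simp only [Nat.choose_zero_right, Nat.lt_one_iff] at hr
      subst hr
      rw [hD] at hw
      simp [macDDown] at hw
      subst hw
      simp
  | succ n ih =>
    intro h w hw
    rcases Nat.eq_zero_or_pos h with rfl | hh
    · simp [macDDown_zero] at hw
    obtain ⟨a, r, ha, hr, e, hU, hD⟩ := greedy (n + 1) h hh
    have hapos : 0 < a.choose (n + 1 + 1) := Nat.choose_pos ha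
    rcases le_or_gt w r with hwr | hwr
    · -- the window stays inside the last block
      have h1 := macUp_block (n := n + 1) (a := a) (r := r - w) (by omega) (by omega)
      rw [show a.choose (n + 1 + 1) + (r - w) = h - w by omega] at h1
      have h2 := macUp_subadd (n + 1) w (r - w)
      rw [show w + (r - w) = r by omega] at h2
      omega
    · -- the window consists of the last block and the final `s` elements of the previous one
      have hb := macDDown_le_choose n a r hr
      have hle := macDDown_le (n + 1) r
      obtain ⟨c, rfl⟩ : ∃ c, a = c + 1 := ⟨a - 1, by omega⟩
      simp only [Nat.add_sub_cancel] at *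
      have ec : (c + 1).choose (n + 1 + 1) = c.choose (n + 1) + c.choose (n + 1 + 1) :=
        Nat.choose_succ_succ _ _
      have ec2 : (c + 1 + 1).choose (n + 1 + 1)
          = (c + 1).choose (n + 1) + (c + 1).choose (n + 1 + 1) := Nat.choose_succ_succ _ _
      have hL := macUp_choose (n := n + 1) (a := c) (by omega)
      have hLpos : 0 < c.choose (n + 1) := Nat.choose_pos (by omega)
      obtain ⟨s, rfl⟩ : ∃ s, w = r + s := ⟨w - r, by omega⟩
      have hs : s < c.choose (n + 1) := by omega
      have h1 := macUp_block (n := n + 1) (a := c) (r := c.choose (n + 1) - s)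
        (by omega) (by omega)
      rw [show c.choose (n + 1 + 1) + (c.choose (n + 1) - s) = h - (r + s) by omega] at h1
      rcases le_or_gt (r + s) (c.choose (n + 1)) with hrs | hrs
      · have h2 := macUp_exchange (n + 1) c (r + s) (c.choose (n + 1) - s) hrs (by omega)
        rw [min_eq_right (by omega),
          show r + s + (c.choose (n + 1) - s) - c.choose (n + 1) = r by omega] at h2
        omega
      · -- the window overshoots `L` by `t`, and the bound is the same one for `r` and `t`
        obtain ⟨t, ht⟩ : ∃ t, r + s = c.choose (n + 1) + t := ⟨r + s - c.choose (n + 1), by omega⟩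
        have h2 := macUp_block (n := n) (a := c) (r := t) (by omega) (by omega)
        have h3 := ih r t (by omega)
        rw [ht, h2]
        rw [ht] at h1
        rw [show c.choose (n + 1) - s = r - t by omega] at h1
        omega

/-- The numerical inequality behind Macaulay's bound: a set of `w + u` monomials, `w` of them free of
the chosen variable, cannot beat `macUp (n+1) (w + u)`. -/
lemma macUp_le_max (n w u : ℕ) :
    macUp (n + 1) (w + u) ≤ macUp n w + max (w + u) (macUp (n + 1) u) := by
  rcases lt_or_ge w (macDDown (n + 1) (w + u)) with h | h
  · have := macUp_window n _ _ h
    rw [Nat.add_sub_cancel_left] at this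
    omega
  · have := macUp_eq_add n (w + u)
    have := macUp_mono n h
    omega

/-! ### Slices of a set of monomials -/

/-- The monomials of `V` not involving `x_i`, as monomials in the remaining variables. -/
def sliceAt {n : ℕ} (i : Fin (n + 1)) (V : Finset (Fin (n + 1) → ℕ)) : Finset (Fin n → ℕ) :=
  (V.filter fun v => v i = 0).image i.removeNth

/-- The quotients by `x_i` of the monomials of `V` divisible by `x_i`. -/
def quotAt {n : ℕ} (i : Fin n) (V : Finset (Fin n → ℕ)) : Finset (Fin n → ℕ) :=
  (V.filter fun v => v i ≠ 0).image fun v => v - Pi.single i 1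

lemma mem_shad {n : ℕ} {V : Finset (Fin n → ℕ)} {u : Fin n → ℕ} :
    u ∈ shad V ↔ ∃ j, ∃ v ∈ V, v + Pi.single j 1 = u := by
  simp [shad]

lemma card_slice {n : ℕ} (i : Fin (n + 1)) (V : Finset (Fin (n + 1) → ℕ)) :
    (sliceAt i V).card = (V.filter fun v => v i = 0).card := by
  refine Finset.card_image_of_injOn fun v hv w hw h => ?_
  simp only [coe_filter, Set.mem_ofPred_eq] at hv hw
  rw [← i.insertNth_self_removeNth v, ← i.insertNth_self_removeNth w, hv.2, hw.2, h]

lemma sub_single_add {n : ℕ} {i : Fin n} {v : Fin n → ℕ} (h : v i ≠ 0) :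
    v - Pi.single i 1 + Pi.single i 1 = v := by
  ext k
  by_cases hk : k = i
  · subst hk; simp; omega
  · simp [hk]

lemma card_quot {n : ℕ} (i : Fin n) (V : Finset (Fin n → ℕ)) :
    (quotAt i V).card = (V.filter fun v => v i ≠ 0).card := by
  refine Finset.card_image_of_injOn fun v hv w hw h => ?_
  simp only [coe_filter, Set.mem_ofPred_eq] at hv hw
  rw [← sub_single_add hv.2, ← sub_single_add hw.2, h]

/-- The part of `MV` free of `x_i` contains the shadow of the sliceAt in one variable fewer. -/
lemma card_shad_slice_le {n : ℕ} (i : Fin (n + 1)) (V : Finset (Fin (n + 1) → ℕ)) :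
    (shad (sliceAt i V)).card ≤ ((shad V).filter fun v => v i = 0).card := by
  refine Finset.card_le_card_of_injOn (fun w => i.insertNth (0 : ℕ) w) ?_ ?_
  · intro w hw
    obtain ⟨j, v, hv, rfl⟩ := mem_shad.1 hw
    simp only [sliceAt, mem_image, mem_filter] at hv
    obtain ⟨v, ⟨hv, h0⟩, rfl⟩ := hv
    simp only [coe_filter, Set.mem_ofPred_eq]
    refine ⟨mem_shad.2 ⟨i.succAbove j, v, hv, ?_⟩, by simp⟩
    ext k
    refine Fin.succAboveCases i ?_ (fun l => ?_) k
    · simp [h0, (Fin.succAbove_ne i j).symm]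
    · simp [Fin.removeNth, Pi.single_apply]
  · intro v _ w _ h
    simpa using h

lemma image_add_subset {n : ℕ} (i : Fin n) (V : Finset (Fin n → ℕ)) :
    V.image (· + Pi.single i 1) ⊆ (shad V).filter fun v => v i ≠ 0 := by
  intro u hu
  obtain ⟨v, hv, rfl⟩ := mem_image.1 hu
  exact mem_filter.2 ⟨mem_shad.2 ⟨i, v, hv, rfl⟩, by simp⟩

lemma card_image_add {n : ℕ} (i : Fin n) (V : Finset (Fin n → ℕ)) :
    (V.image (· + Pi.single i 1)).card = V.card :=
  Finset.card_image_of_injective _ (add_left_injective _)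

lemma image_add_shad_quot_subset {n : ℕ} (i : Fin n) (V : Finset (Fin n → ℕ)) :
    (shad (quotAt i V)).image (· + Pi.single i 1) ⊆ (shad V).filter fun v => v i ≠ 0 := by
  intro u hu
  obtain ⟨t, ht, rfl⟩ := mem_image.1 hu
  obtain ⟨j, v, hv, rfl⟩ := mem_shad.1 ht
  simp only [quotAt, mem_image, mem_filter] at hv
  obtain ⟨v, ⟨hv, h0⟩, rfl⟩ := hv
  refine mem_filter.2 ⟨mem_shad.2 ⟨j, v, hv, ?_⟩, by simp⟩
  rw [add_right_comm, sub_single_add h0]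

lemma card_split {n : ℕ} (i : Fin n) (V : Finset (Fin n → ℕ)) :
    (V.filter fun v => v i = 0).card + (V.filter fun v => v i ≠ 0).card = V.card :=
  Finset.card_filter_add_card_filter_not _

/-! ### The shadow bound and its equality case -/

/-- Macaulay's lower bound for the shadow of a set of monomials in `n + 1` variables. -/
lemma macaulay (n : ℕ) : ∀ V : Finset (Fin (n + 1) → ℕ), macUp n V.card ≤ (shad V).card := by
  induction n with
  | zero =>
    intro V
    rw [← card_image_add 0 V]
    exact Finset.card_le_card ((image_add_subset 0 V).trans (filter_subset _ _))
  | succ n ih =>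
    suffices H : ∀ (d : ℕ) (V : Finset (Fin (n + 1 + 1) → ℕ)), (∀ v ∈ V, v 0 ≤ d) →
        macUp (n + 1) V.card ≤ (shad V).card from
      fun V => H (V.sup fun v => v 0) V fun v hv => Finset.le_sup (f := fun v => v 0) hv
    intro d
    -- the bound for the quotients by `x_0`, whose exponents of `x_0` are smaller, implies it for `V`
    have step : ∀ V : Finset (Fin (n + 1 + 1) → ℕ),
        macUp (n + 1) (quotAt 0 V).card ≤ (shad (quotAt 0 V)).card →
        macUp (n + 1) V.card ≤ (shad V).card := by
      intro V hq
      have h1 := (ih (sliceAt 0 V)).trans (card_shad_slice_le 0 V)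
      have h2 := Finset.card_le_card (image_add_subset 0 V)
      have h3 := Finset.card_le_card (image_add_shad_quot_subset 0 V)
      rw [card_image_add] at h2 h3
      have h4 := card_split 0 V
      have h5 := card_split 0 (shad V)
      rw [← card_slice, ← card_quot] at h4
      have h6 := macUp_le_max n (sliceAt 0 V).card (quotAt 0 V).card
      rw [h4] at h6
      omega
    induction d with
    | zero =>
      intro V hV
      refine step V ?_
      have : quotAt 0 V = ∅ := by
        simp only [quotAt, image_eq_empty, filter_eq_empty_iff]
        intro v hv
        have := hV v hv
        omega
      simp [this, macUp_zero]
    | succ d ihd =>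
      intro V hV
      refine step V (ihd _ ?_)
      intro v hv
      simp only [quotAt, mem_image, mem_filter] at hv
      obtain ⟨v, ⟨hv, h0⟩, rfl⟩ := hv
      have := hV v hv
      simp
      omega

/-- If `D_i` has exactly `|V|_{<<n+1>>}` elements and `V` is Gotzmann, every bound in the splitting
of `MV` by `x_i` is tight, so all multiples of `x_i` in `MV` lie in `x_i V`. -/
lemma exchange_of_card {n : ℕ} (V : Finset (Fin (n + 1 + 1) → ℕ)) (i : Fin (n + 1 + 1))
    (hG : (shad V).card = macUp (n + 1) V.card)
    (hD : (V.filter fun v => v i = 0).card = macDDown (n + 1) V.card) :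
    ∀ v ∈ V, v i ≠ 0 → ∀ j, v + Pi.single j 1 - Pi.single i 1 ∈ V := by
  have h1 := (macaulay n (sliceAt i V)).trans (card_shad_slice_le i V)
  rw [card_slice, hD] at h1
  have h5 := card_split i (shad V)
  have h6 := macUp_eq_add n V.card
  have heq := Finset.eq_of_subset_of_card_le (image_add_subset i V)
    (by rw [card_image_add]; omega)
  intro v hv h0 j
  have hm : v + Pi.single j 1 ∈ (shad V).filter fun v => v i ≠ 0 :=
    mem_filter.2 ⟨mem_shad.2 ⟨j, v, hv, rfl⟩, by simp; omega⟩
  rw [← heq] at hm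
  obtain ⟨w, hw, e⟩ := mem_image.1 hm
  rw [← e]
  simpa using hw

/-- A nonempty set of monomials of degree `d` closed under `v ↦ x_j v / x_i` is everything. -/
lemma mem_of_exchange {n : ℕ} (V : Finset (Fin n → ℕ))
    (hex : ∀ i, ∀ v ∈ V, v i ≠ 0 → ∀ j, v + Pi.single j 1 - Pi.single i 1 ∈ V)
    (u : Fin n → ℕ) : ∀ (m : ℕ) (v : Fin n → ℕ), v ∈ V → ∑ i, v i = ∑ i, u i →
      ∑ i, (v i - u i) ≤ m → u ∈ V := by
  have hle : ∀ v : Fin n → ℕ, (∀ i, v i ≤ u i) → ∑ i, v i = ∑ i, u i → v = u := by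
    intro v h hs
    ext i
    exact (Finset.sum_eq_sum_iff_of_le fun i _ => h i).1 hs i (mem_univ i)
  intro m
  induction m with
  | zero =>
    intro v hv hs hm
    have := (Finset.sum_eq_zero_iff (s := univ)).1 (Nat.le_zero.1 hm)
    rw [← hle v (fun i => by have := this i (mem_univ i); omega) hs]
    exact hv
  | succ m ih =>
    intro v hv hs hm
    by_cases hvu : v = u
    · exact hvu ▸ hv
    obtain ⟨i, hi⟩ : ∃ i, u i < v i := by
      by_contra hc
      push Not at hc
      exact hvu (hle v hc hs)
    obtain ⟨j, hj⟩ : ∃ j, v j < u j := by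
      by_contra hc
      push Not at hc
      have := (Finset.sum_eq_sum_iff_of_le fun i _ => hc i).1 hs.symm i (mem_univ i)
      omega
    have hij : i ≠ j := by rintro rfl; omega
    have hw := hex i v hv (by omega) j
    set w := v + Pi.single j 1 - Pi.single i 1 with hwdef
    have hwi : w i = v i - 1 := by simp [hwdef, hij]
    have hwk : ∀ k, k ≠ i → w k - u k = v k - u k := by
      intro k hk
      by_cases hkj : k = j
      · subst hkj; simp [hwdef, hk]; omega
      · simp [hwdef, hk, hkj]
    refine ih w hw ?_ ?_
    · have e : w + Pi.single i 1 = v + Pi.single j 1 := by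
        rw [hwdef]; exact sub_single_add (by simp; omega)
      have e2 : ∑ k, (w + Pi.single i 1 : Fin n → ℕ) k = ∑ k, (v + Pi.single j 1 : Fin n → ℕ) k := by rw [e]
      simp only [Pi.add_apply, Finset.sum_add_distrib, Finset.sum_pi_single', mem_univ, if_true]
        at e2
      omega
    · have hlt : ∑ k, (w k - u k) < ∑ k, (v k - u k) := by
        refine Finset.sum_lt_sum (fun k _ => ?_) ⟨i, mem_univ i, by omega⟩
        by_cases hk : k = i
        · subst hk; omega
        · exact (hwk k hk).le
      omega

/-- Let `V` be a nonempty Gotzmann set of monomials of degree `d` in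
`K[x_1,…,x_n]` with `gcd(V) = 1`.  If `|D_i(V)| = |V|_{<<n-1>>}` for every `i`,
then `V = M^d`. -/
theorem eq_full_of_Dset_card {n d : ℕ} (hn : 0 < n) (V : Finset (Fin n → ℕ))
    (hne : V.Nonempty) (hdeg : ∀ v ∈ V, ∑ i, v i = d)
    (hG : (shad V).card = macUp (n - 1) V.card)
    (hgcd : gcdMon V = 0)
    (hD : ∀ i : Fin n, (Dset V i).card = macDDown (n - 1) V.card) :
    V = Finset.Nat.antidiagonalTuple n d := by
  have hpos : 0 < V.card := hne.card_pos
  -- for a singleton `D_i` is empty, while `1_{<<m>>}` is positive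
  have hcard : 1 < V.card := by
    by_contra hc
    have h0 := hD ⟨0, hn⟩
    have : Dset V ⟨0, hn⟩ = ∅ := by simp [Dset, Kset, show V.card ≤ 1 by omega]
    rw [this, card_empty] at h0
    rcases hm : n - 1 with _ | m
    · rw [hm] at h0; simp only [macDDown] at h0; omega
    · rw [hm] at h0
      obtain ⟨a, r, ha, -, -, -, hd⟩ := greedy m _ hpos
      have : 0 < (a - 1).choose m := Nat.choose_pos (by omega)
      omega
  have hDset : ∀ i, Dset V i = V.filter fun v => v i = 0 := by
    intro i
    ext v
    have key : (∀ j, (Pi.single i 1 : Fin n → ℕ) j ≤ v j) ↔ v i ≠ 0 := by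
      constructor
      · intro h; have := h i; simp at this; omega
      · intro h j
        by_cases hj : j = i
        · subst hj; simp; omega
        · simp [hj]
    simp only [Dset, Kset, if_neg (show ¬ V.card ≤ 1 by omega), hgcd, Pi.zero_apply, zero_add,
      mem_sdiff, mem_filter, key]
    tauto
  obtain ⟨m, rfl⟩ : ∃ m, n = m + 1 + 1 := by
    refine ⟨n - 2, ?_⟩
    by_contra hc
    obtain rfl : n = 1 := by omega
    obtain ⟨v, hv, w, hw, hvw⟩ := Finset.one_lt_card.1 hcard
    have h1 := hdeg v hv
    have h2 := hdeg w hw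
    simp only [Fin.sum_univ_one] at h1 h2
    apply hvw
    ext k
    rw [Subsingleton.elim k 0]
    omega
  have hex := fun i => exchange_of_card V i hG (by rw [← hDset]; exact hD i)
  obtain ⟨v, hv⟩ := hne
  ext u
  rw [Finset.Nat.mem_antidiagonalTuple]
  exact ⟨hdeg u, fun hu => mem_of_exchange V hex u _ v hv ((hdeg v hv).trans hu.symm) le_rfl⟩
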